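/- Every triangle-free induced subgraph of the triangular lattice is (2a,a)-choosable for every positive integer a, i.e., it is (a,b)-choosable whenever a/b ≥ 5/2; in particular it is (5,2)-choosable and (7,3)-colorable. -/

import Mathlib

def triLattice : SimpleGraph (ℤ × ℤ) :=
  SimpleGraph.fromRel (fun p q =>
    q - p ∈ ({(1, 0), (-1, 0), (0, 1), (0, -1), (-1, 1), (1, -1)} : Set (ℤ × ℤ)))

def Choosable {V : Type*} (G : SimpleGraph V) (a b : ℕ) : Prop :=
  ∀ L : V → Finset ℕ, (∀ v, (L v).card = a) →
    ∃ c : V → Finset ℕ, (∀ v, c v ⊆ L v ∧ (c v).card = b) ∧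
      ∀ u v, G.Adj u v → Disjoint (c u) (c v)

/-- Explicit description of adjacency in the triangular lattice. -/
lemma triLattice_adj_iff (p q : ℤ × ℤ) : triLattice.Adj p q ↔
    (q.1 = p.1 + 1 ∧ q.2 = p.2) ∨ (q.1 = p.1 - 1 ∧ q.2 = p.2) ∨
    (q.1 = p.1 ∧ q.2 = p.2 + 1) ∨ (q.1 = p.1 ∧ q.2 = p.2 - 1) ∨
    (q.1 = p.1 - 1 ∧ q.2 = p.2 + 1) ∨ (q.1 = p.1 + 1 ∧ q.2 = p.2 - 1) := by
  obtain ⟨x, y⟩ := p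
  obtain ⟨z, w⟩ := q
  simp only [triLattice, SimpleGraph.fromRel_adj, Set.mem_insert_iff, Set.mem_singleton_iff,
    Prod.mk_sub_mk, Prod.mk.injEq, ne_eq]
  omega

/-- One step of the path colouring: a large list between two small lists. -/
lemma step_lemma (b e : ℕ) (hbe : b ≤ 2 * e) (A A' B F : Finset ℕ)
    (hA : b + e ≤ A.card) (hA' : b + e ≤ A'.card) (hB : B.card = 2 * b + e)
    (hFA : F ⊆ A) (hF : F.card ≤ b - e) :
    ∃ F' ⊆ A', F'.card ≤ b - e ∧ ∀ C', F' ⊆ C' → C' ⊆ A' → C'.card = b →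
      ∃ C, F ⊆ C ∧ C ⊆ A ∧ C.card = b ∧ ∃ D ⊆ B, D.card = b ∧ Disjoint D C ∧ Disjoint D C' := by
  have h1 : (A \ B).card + (A ∩ B).card = A.card := Finset.card_sdiff_add_card_inter A B
  have h2 : (A' \ B).card + (A' ∩ B).card = A'.card := Finset.card_sdiff_add_card_inter A' B
  have h3 : ((A ∩ B) ∪ (A' ∩ B)).card + ((A ∩ B) ∩ (A' ∩ B)).card
      = (A ∩ B).card + (A' ∩ B).card := Finset.card_union_add_card_inter _ _
  have h4 : ((A ∩ B) ∪ (A' ∩ B)).card ≤ B.card :=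
    Finset.card_le_card (Finset.union_subset Finset.inter_subset_right Finset.inter_subset_right)
  have h5 : b - e ≤ (A \ B).card + (A' \ B).card + ((A ∩ B) ∩ (A' ∩ B)).card := by omega
  obtain ⟨p, q, m, hp, hq, hm, hs⟩ : ∃ p q m : ℕ, p ≤ (A \ B).card ∧ q ≤ (A' \ B).card ∧
      m ≤ ((A ∩ B) ∩ (A' ∩ B)).card ∧ p + q + m = b - e := by
    refine ⟨min (A \ B).card (b - e), min (A' \ B).card (b - e - min (A \ B).card (b - e)),
      b - e - min (A \ B).card (b - e) - min (A' \ B).card (b - e - min (A \ B).card (b - e)),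
      ?_, ?_, ?_, ?_⟩ <;> omega
  obtain ⟨P, hPs, hPc⟩ := Finset.exists_subset_card_eq hp
  obtain ⟨Q, hQs, hQc⟩ := Finset.exists_subset_card_eq hq
  obtain ⟨M, hMs, hMc⟩ := Finset.exists_subset_card_eq hm
  have hPA : P ⊆ A := fun x hx => (Finset.mem_sdiff.1 (hPs hx)).1
  have hQA : Q ⊆ A' := fun x hx => (Finset.mem_sdiff.1 (hQs hx)).1
  have hMA : M ⊆ A := fun x hx => by have := hMs hx; simp at this; tauto
  have hMA' : M ⊆ A' := fun x hx => by have := hMs hx; simp at this; tauto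
  have hMB : M ⊆ B := fun x hx => by have := hMs hx; simp at this; tauto
  refine ⟨Q ∪ M, Finset.union_subset hQA hMA', ?_, ?_⟩
  · have := Finset.card_union_le Q M
    omega
  intro C' hFC' hCA' hC'c
  have hsmall : (F ∪ (P ∪ M)).card ≤ b := by
    have h6 := Finset.card_union_le P M
    have h7 := Finset.card_union_le F (P ∪ M)
    omega
  obtain ⟨C, hC1, hC2, hC3⟩ := Finset.exists_subsuperset_card_eq
    (Finset.union_subset hFA (Finset.union_subset hPA hMA)) hsmall (by omega : b ≤ A.card)
  have hFC : F ⊆ C := fun x hx => hC1 (by simp [hx])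
  have hPC : P ⊆ C := fun x hx => hC1 (by simp [hx])
  have hMC : M ⊆ C := fun x hx => hC1 (by simp [hx])
  refine ⟨C, hFC, hC2, hC3, ?_⟩
  have g1 : (C \ B).card + (C ∩ B).card = C.card := Finset.card_sdiff_add_card_inter C B
  have g2 : (C' \ B).card + (C' ∩ B).card = C'.card := Finset.card_sdiff_add_card_inter C' B
  have g3 : ((C ∩ B) ∪ (C' ∩ B)).card + ((C ∩ B) ∩ (C' ∩ B)).card
      = (C ∩ B).card + (C' ∩ B).card := Finset.card_union_add_card_inter _ _
  have g4 : P.card ≤ (C \ B).card := Finset.card_le_card fun x hx =>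
    Finset.mem_sdiff.2 ⟨hPC hx, (Finset.mem_sdiff.1 (hPs hx)).2⟩
  have g5 : Q.card ≤ (C' \ B).card := Finset.card_le_card fun x hx =>
    Finset.mem_sdiff.2 ⟨hFC' (by simp [hx]), (Finset.mem_sdiff.1 (hQs hx)).2⟩
  have g6 : M.card ≤ ((C ∩ B) ∩ (C' ∩ B)).card := Finset.card_le_card fun x hx => by
    have hx1 := hMC hx
    have hx2 := hMB hx
    have hx3 : x ∈ C' := hFC' (by simp [hx])
    simp [hx1, hx2, hx3]
  have g7 : B.card - ((C ∩ B) ∪ (C' ∩ B)).card ≤ (B \ ((C ∩ B) ∪ (C' ∩ B))).card :=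
    Finset.le_card_sdiff _ _
  obtain ⟨D, hD1, hD2⟩ := Finset.exists_subset_card_eq
    (by omega : b ≤ (B \ ((C ∩ B) ∪ (C' ∩ B))).card)
  refine ⟨D, fun x hx => (Finset.mem_sdiff.1 (hD1 hx)).1, hD2, ?_, ?_⟩
  · rw [Finset.disjoint_left]
    intro x hx hxC
    have := hD1 hx
    simp at this
    tauto
  · rw [Finset.disjoint_left]
    intro x hx hxC
    have := hD1 hx
    simp at this
    tauto

/-- Colouring of a path with alternating small and large lists. -/
lemma path_lemma (b e : ℕ) (hbe : b ≤ 2 * e) (A B : ℕ → Finset ℕ) (k : ℕ)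
    (hA : ∀ i ≤ k, b + e ≤ (A i).card) (hB : ∀ i < k, (B i).card = 2 * b + e) :
    ∃ F ⊆ A k, F.card ≤ b - e ∧ ∀ C', F ⊆ C' → C' ⊆ A k → C'.card = b →
      ∃ C D : ℕ → Finset ℕ, C k = C' ∧ (∀ i ≤ k, C i ⊆ A i ∧ (C i).card = b) ∧
        ∀ i < k, D i ⊆ B i ∧ (D i).card = b ∧ Disjoint (D i) (C i) ∧
          Disjoint (D i) (C (i + 1)) := by
  induction k with
  | zero =>
    refine ⟨∅, by simp, by simp, fun C' _ h1 h2 => ⟨fun _ => C', fun _ => ∅, rfl, ?_, by simp⟩⟩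
    intro i hi
    obtain rfl : i = 0 := by omega
    exact ⟨h1, h2⟩
  | succ k ih =>
    obtain ⟨F, hF1, hF2, hF3⟩ := ih (fun i hi => hA i (by omega)) (fun i hi => hB i (by omega))
    obtain ⟨F', hF'1, hF'2, hF'3⟩ := step_lemma b e hbe (A k) (A (k + 1)) (B k) F
      (hA k (by omega)) (hA (k + 1) le_rfl) (hB k (by omega)) hF1 hF2
    refine ⟨F', hF'1, hF'2, fun C' h1 h2 h3 => ?_⟩
    obtain ⟨C0, hC1, hC2, hC3, D0, hD1, hD2, hD3, hD4⟩ := hF'3 C' h1 h2 h3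
    obtain ⟨C, D, hk, hC, hD⟩ := hF3 C0 hC1 hC2 hC3
    refine ⟨fun i => if i = k + 1 then C' else C i, fun i => if i = k then D0 else D i,
      by simp, ?_, ?_⟩
    · intro i hi
      by_cases h : i = k + 1
      · subst h; simp [h2, h3]
      · simpa [h] using hC i (by omega)
    · intro i hi
      by_cases h : i = k
      · subst h
        simp [hD1, hD2, hD4, hk, hD3]
      · have h' : i ≠ k + 1 := by omega
        simpa [h, h'] using hD i (by omega)

lemma path_colouring (b e : ℕ) (hbe : b ≤ 2 * e) (A B : ℕ → Finset ℕ) (k : ℕ)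
    (hA : ∀ i ≤ k, b + e ≤ (A i).card) (hB : ∀ i < k, (B i).card = 2 * b + e) :
    ∃ C D : ℕ → Finset ℕ, (∀ i ≤ k, C i ⊆ A i ∧ (C i).card = b) ∧
        ∀ i < k, D i ⊆ B i ∧ (D i).card = b ∧ Disjoint (D i) (C i) ∧
          Disjoint (D i) (C (i + 1)) := by
  obtain ⟨F, h1, h2, h3⟩ := path_lemma b e hbe A B k hA hB
  obtain ⟨C', g1, g2, g3⟩ := Finset.exists_subsuperset_card_eq h1 (by omega : F.card ≤ b)
    (by have := hA k le_rfl; omega)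
  obtain ⟨C, D, -, h4, h5⟩ := h3 C' g1 g2 g3
  exact ⟨C, D, h4, h5⟩

set_option maxHeartbeats 2000000 in
/-- Finite case. -/
lemma finite_case (b e : ℕ) (hbe : b ≤ 2 * e) (L : ℤ × ℤ → Finset ℕ)
    (hL : ∀ v, (L v).card = 2 * b + e) (n : ℕ) : ∀ R : Finset (ℤ × ℤ), R.card ≤ n →
    (∀ u ∈ R, ∀ v ∈ R, ∀ w ∈ R, triLattice.Adj u v → triLattice.Adj u w →
      triLattice.Adj v w → False) →
    ∃ c : ℤ × ℤ → Finset ℕ, (∀ v ∈ R, c v ⊆ L v ∧ (c v).card = b) ∧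
      ∀ u ∈ R, ∀ v ∈ R, triLattice.Adj u v → Disjoint (c u) (c v) := by
  classical
  induction n with
  | zero =>
    intro R hR _
    obtain rfl : R = ∅ := by simpa using hR
    exact ⟨fun _ => ∅, by simp, by simp⟩
  | succ n ih =>
    intro R hR htf
    rcases R.eq_empty_or_nonempty with rfl | hne
    · exact ⟨fun _ => ∅, by simp, by simp⟩
    have htf' : ∀ x y z w s t : ℤ, (x, y) ∈ R → (z, w) ∈ R → (s, t) ∈ R →
        ¬ (triLattice.Adj (x, y) (z, w) ∧ triLattice.Adj (x, y) (s, t) ∧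
        triLattice.Adj (z, w) (s, t)) :=
      fun x y z w s t h1 h2 h3 h => htf _ h1 _ h2 _ h3 h.1 h.2.1 h.2.2
    simp only [triLattice_adj_iff] at htf'
    obtain ⟨p0, hp0R, hp0⟩ := R.exists_max_image (fun v => v.2 - v.1) hne
    set m : ℤ := p0.2 - p0.1 with hm
    by_cases hdeg : ∀ x y : ℤ, (x, y) ∈ R → y - x = m → (x + 1, y) ∈ R ∧ (x, y - 1) ∈ R
    · -- zigzag path
      obtain ⟨p, hpT, hpmin⟩ := (R.filter (fun v => v.2 - v.1 = m)).exists_min_image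
        (fun v => v.1) ⟨p0, by simp [hp0R, hm]⟩
      obtain ⟨x0, y0⟩ := p
      simp only [Finset.mem_filter] at hpT hpmin
      obtain ⟨hpR, hpm⟩ := hpT
      have hleft : (x0 - 1, y0 - 1) ∉ R := fun h => by
        have := hpmin _ ⟨h, by simp; omega⟩
        simp at this
      have hex : ∃ k : ℕ, (x0 + k, y0 + k) ∉ R := by
        by_contra hcon
        push Not at hcon
        have hinj : Function.Injective (fun k : ℕ => ((x0 + k, y0 + k) : ℤ × ℤ)) := by
          intro i j hij
          simp at hij
          omega
        exact Set.infinite_of_injective_forall_mem hinj (s := (R : Set (ℤ × ℤ)))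
          (fun k => by simpa using hcon k) R.finite_toSet
      obtain ⟨k, hk, hkmin⟩ : ∃ k : ℕ, (x0 + k, y0 + k) ∉ R ∧
          ∀ i < k, (x0 + (i : ℤ), y0 + (i : ℤ)) ∈ R :=
        ⟨Nat.find hex, Nat.find_spec hex, fun i hi => by simpa using Nat.find_min hex hi⟩
      have hkpos : 0 < k := by
        rcases Nat.eq_zero_or_pos k with rfl | h
        · simp at hk; exact absurd hpR hk
        · exact h
      have hu : ∀ i ≤ k, (x0 + (i : ℤ), y0 + (i : ℤ) - 1) ∈ R := by
        intro i hi
        rcases Nat.lt_or_ge i k with h | h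
        · exact (hdeg _ _ (hkmin i h) (by omega)).2
        · obtain ⟨j, rfl⟩ : ∃ j, i = j + 1 := ⟨i - 1, by omega⟩
          have := (hdeg _ _ (hkmin j (by omega)) (by omega)).1
          have e1 : ((x0 + ((j + 1 : ℕ) : ℤ), y0 + ((j + 1 : ℕ) : ℤ) - 1) : ℤ × ℤ)
            = (x0 + (j : ℤ) + 1, y0 + (j : ℤ)) := by
            push_cast; ext <;> simp <;> ring
          rw [e1]; exact this
      let InS : ℤ × ℤ → Prop := fun v =>
        (v.2 - v.1 = m ∧ x0 ≤ v.1 ∧ v.1 < x0 + k) ∨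
        (v.2 - v.1 = m - 1 ∧ x0 ≤ v.1 ∧ v.1 ≤ x0 + k)
      obtain ⟨c0, hc0, hc0d⟩ := ih (R.filter (fun v => ¬ InS v)) (by
          have : (R.filter (fun v => ¬ InS v)).card < R.card := by
            apply Finset.card_lt_card
            rw [Finset.filter_ssubset]
            exact ⟨_, hpR, by simp only [InS, not_not]; omega⟩
          omega) (fun u hu v hv w hw => htf u (Finset.mem_filter.1 hu).1 v
            (Finset.mem_filter.1 hv).1 w (Finset.mem_filter.1 hw).1)
      simp only [Finset.mem_filter] at hc0 hc0d
      -- outside neighbours of the small vertices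
      have hnb : ∀ i ≤ k, ∀ v ∈ R, ¬ InS v →
          triLattice.Adj (x0 + (i : ℤ), y0 + (i : ℤ) - 1) v →
          (i = 0 ∧ ((v.1 = x0 + i ∧ v.2 = y0 + i - 2) ∨ (v.1 = x0 + i + 1 ∧ v.2 = y0 + i - 2))) ∨
          (0 < i ∧ ((v.1 = x0 + i + 1 ∧ v.2 = y0 + i - 1) ∨
            (v.1 = x0 + i + 1 ∧ v.2 = y0 + i - 2))) := by
        rintro i hi ⟨v1, v2⟩ hvR hvS hva
        have hui := hu i hi
        have hlev := hp0 _ hvR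
        rw [triLattice_adj_iff] at hva
        simp only [InS] at hva hvS hlev ⊢
        have k4 : ¬ (v1 = x0 - 1 ∧ v2 = y0 - 1) := by
          rintro ⟨rfl, rfl⟩; exact hleft hvR
        have k5 : ¬ (v1 = x0 + k ∧ v2 = y0 + k) := by
          rintro ⟨rfl, rfl⟩; exact hk hvR
        rcases Nat.eq_zero_or_pos i with rfl | hipos
        · have k3 := htf' _ _ _ _ _ _ hui hpR hvR
          clear htf' hpmin hkmin hu hdeg ih htf hc0 hc0d
          push_cast at *
          try simp only [true_and, false_and, or_false]
          rcases hva with ⟨rfl, rfl⟩ | ⟨rfl, rfl⟩ | ⟨rfl, rfl⟩ | ⟨rfl, rfl⟩ | ⟨rfl, rfl⟩ | ⟨rfl, rfl⟩ <;>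
            omega
        · obtain ⟨j, rfl⟩ : ∃ j, i = j + 1 := ⟨i - 1, by omega⟩
          have htj := hkmin j (by omega)
          have k3 := htf' _ _ _ _ _ _ hui htj hvR
          clear htf' hpmin hkmin hu hdeg ih htf hc0 hc0d
          push_cast at *
          rcases hva with ⟨rfl, rfl⟩ | ⟨rfl, rfl⟩ | ⟨rfl, rfl⟩ | ⟨rfl, rfl⟩ | ⟨rfl, rfl⟩ | ⟨rfl, rfl⟩ <;>
            omega
      have hQ : ∀ i : ℕ, ∃ Q : Finset ℕ, i ≤ k → Q.card ≤ b ∧ ∀ v ∈ R, ¬ InS v →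
          triLattice.Adj (x0 + (i : ℤ), y0 + (i : ℤ) - 1) v → c0 v ⊆ Q := by
        intro i
        by_cases hq : ∃ q ∈ R, ¬ InS q ∧ triLattice.Adj (x0 + (i : ℤ), y0 + (i : ℤ) - 1) q
        · obtain ⟨q, hqR, hqS, hqa⟩ := hq
          refine ⟨c0 q, fun hi => ⟨(hc0 q ⟨hqR, hqS⟩).2.le, fun v hvR hvS hva => ?_⟩⟩
          suffices v = q by rw [this]
          have h1 := hnb i hi q hqR hqS hqa
          have h2 := hnb i hi v hvR hvS hva
          have hui := hu i hi
          obtain ⟨q1, q2⟩ := q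
          obtain ⟨v1, v2⟩ := v
          have k1 := htf' _ _ _ _ _ _ hui hqR hvR
          clear htf' hpmin hkmin hu hdeg ih htf hc0 hc0d
          simp only at h1 h2
          rcases h1 with ⟨hi', ⟨rfl, rfl⟩ | ⟨rfl, rfl⟩⟩ | ⟨hi', ⟨rfl, rfl⟩ | ⟨rfl, rfl⟩⟩ <;>
          rcases h2 with ⟨hi2, ⟨rfl, rfl⟩ | ⟨rfl, rfl⟩⟩ | ⟨hi2, ⟨rfl, rfl⟩ | ⟨rfl, rfl⟩⟩ <;>
          first
          | rfl
          | (exfalso; omega)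
        · exact ⟨∅, fun _ => ⟨by simp, fun v h1 h2 h3 => absurd ⟨v, h1, h2, h3⟩ hq⟩⟩
      choose Q hQ using hQ
      obtain ⟨C, D, hC, hD⟩ := path_colouring b e hbe
        (fun i => L (x0 + (i : ℤ), y0 + (i : ℤ) - 1) \ Q i)
        (fun i => L (x0 + (i : ℤ), y0 + (i : ℤ))) k
        (fun i hi => by
          have h1 := Finset.le_card_sdiff (Q i) (L (x0 + (i : ℤ), y0 + (i : ℤ) - 1))
          have h2 := (hQ i hi).1
          rw [hL] at h1
          show _ ≤ (L (x0 + (i : ℤ), y0 + (i : ℤ) - 1) \ Q i).card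
          omega)
        (fun i _ => hL _)
      let c : ℤ × ℤ → Finset ℕ := fun v => if InS v then
        (if v.2 - v.1 = m then D (v.1 - x0).toNat else C (v.1 - x0).toNat) else c0 v
      -- three kinds of vertices
      have hkind : ∀ v, InS v → (∃ i : ℕ, i < k ∧ v = (x0 + (i : ℤ), y0 + (i : ℤ)) ∧ c v = D i) ∨
          (∃ i : ℕ, i ≤ k ∧ v = (x0 + (i : ℤ), y0 + (i : ℤ) - 1) ∧ c v = C i) := by
        rintro ⟨v1, v2⟩ hv
        have hv' := hv
        simp only [InS] at hv'
        rcases hv' with hv' | hv'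
        · left
          refine ⟨(v1 - x0).toNat, by omega, by ext <;> simp <;> omega, ?_⟩
          simp only [c, if_pos hv, if_pos hv'.1]
        · right
          refine ⟨(v1 - x0).toNat, by omega, by ext <;> simp <;> omega, ?_⟩
          have : ¬ (v2 - v1 = m) := by omega
          simp only [c, if_pos hv, if_neg this]
      have hout : ∀ v, ¬ InS v → c v = c0 v := fun v hv => by simp only [c, if_neg hv]
      -- disjointness between a vertex of the path and an outside vertex
      have hmix : ∀ u ∈ R, ∀ v ∈ R, InS u → ¬ InS v → triLattice.Adj u v →
          Disjoint (c u) (c v) := by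
        intro u huR v hvR hu' hv ha
        rw [hout v hv]
        rcases hkind u hu' with ⟨i, hi, rfl, hcu⟩ | ⟨i, hi, rfl, hcu⟩
        · exfalso
          have hlev := hp0 v hvR
          have k1 := (hdeg _ _ huR (by omega)).1
          obtain ⟨v1, v2⟩ := v
          have k2 := htf' _ _ _ _ _ _ huR k1 hvR
          rw [triLattice_adj_iff] at ha
          simp only [InS] at hv ha hlev
          clear htf' hdeg ih htf hc0 hc0d
          rcases ha with ⟨rfl, rfl⟩ | ⟨rfl, rfl⟩ | ⟨rfl, rfl⟩ |
            ⟨rfl, rfl⟩ | ⟨rfl, rfl⟩ | ⟨rfl, rfl⟩ <;>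
            omega
        · rw [hcu]
          have h1 := (hQ i hi).2 v hvR hv ha
          have h2 := (hC i hi).1
          rw [Finset.disjoint_left]
          intro z hz hz'
          exact (Finset.mem_sdiff.1 (h2 hz)).2 (h1 hz')
      refine ⟨c, ?_, ?_⟩
      · intro v hvR
        by_cases hv : InS v
        · rcases hkind v hv with ⟨i, hi, rfl, hcu⟩ | ⟨i, hi, rfl, hcu⟩
          · rw [hcu]
            exact ⟨(hD i hi).1, (hD i hi).2.1⟩
          · rw [hcu]
            exact ⟨(hC i hi).1.trans Finset.sdiff_subset, (hC i hi).2⟩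
        · rw [hout v hv]
          exact hc0 v ⟨hvR, hv⟩
      · intro u huR v hvR ha
        by_cases hu' : InS u
        · by_cases hv : InS v
          · rcases hkind u hu' with ⟨i, hi, rfl, hcu⟩ | ⟨i, hi, rfl, hcu⟩ <;>
              rcases hkind v hv with ⟨j, hj, rfl, hcv⟩ | ⟨j, hj, rfl, hcv⟩ <;>
              rw [hcu, hcv] <;> rw [triLattice_adj_iff] at ha <;> simp only at ha
            · omega
            · obtain rfl | rfl : j = i ∨ j = i + 1 := by omega
              · exact (hD _ hi).2.2.1
              · exact (hD _ hi).2.2.2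
            · obtain rfl | rfl : i = j ∨ i = j + 1 := by omega
              · exact (hD _ hj).2.2.1.symm
              · exact (hD _ hj).2.2.2.symm
            · omega
          · exact hmix u huR v hvR hu' hv ha
        · by_cases hv : InS v
          · exact (hmix v hvR u huR hv hu' ha.symm).symm
          · rw [hout u hu', hout v hv]
            exact hc0d u ⟨huR, hu'⟩ v ⟨hvR, hv⟩ ha
    · -- a vertex of degree at most one
      push Not at hdeg
      obtain ⟨x, y, hpR, hpm, hp⟩ := hdeg
      obtain ⟨c0, hc0, hc0d⟩ := ih (R.erase (x, y))
        (by rw [Finset.card_erase_of_mem hpR]; omega)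
        (fun u hu v hv w hw => htf u (Finset.mem_erase.1 hu).2 v
          (Finset.mem_erase.1 hv).2 w (Finset.mem_erase.1 hw).2)
      have hQ : ∃ Q : Finset ℕ, Q.card ≤ b ∧ ∀ v ∈ R, triLattice.Adj (x, y) v → c0 v ⊆ Q := by
        by_cases hq : ∃ q ∈ R, triLattice.Adj (x, y) q
        · obtain ⟨q, hqR, hqa⟩ := hq
          refine ⟨c0 q, (hc0 q (Finset.mem_erase.2 ⟨hqa.ne', hqR⟩)).2.le, fun v hvR hva => ?_⟩
          suffices v = q by rw [this]
          have hlev1 := hp0 q hqR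
          have hlev2 := hp0 v hvR
          obtain ⟨q1, q2⟩ := q
          obtain ⟨v1, v2⟩ := v
          have k1 := htf' _ _ _ _ _ _ hpR hqR hvR
          have k2 : ¬ (q1 = x + 1 ∧ q2 = y ∧ v1 = x ∧ v2 = y - 1) := by
            rintro ⟨rfl, rfl, rfl, rfl⟩; exact hp hqR hvR
          have k3 : ¬ (v1 = x + 1 ∧ v2 = y ∧ q1 = x ∧ q2 = y - 1) := by
            rintro ⟨rfl, rfl, rfl, rfl⟩; exact hp hvR hqR
          rw [triLattice_adj_iff] at hqa hva
          simp only at hqa hva hlev1 hlev2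
          clear htf' ih htf hc0 hc0d
          have g1 : (q1 = x + 1 ∧ q2 = y) ∨ (q1 = x ∧ q2 = y - 1) ∨ (q1 = x + 1 ∧ q2 = y - 1) := by
            clear k1 k2 k3 hva
            omega
          have g2 : (v1 = x + 1 ∧ v2 = y) ∨ (v1 = x ∧ v2 = y - 1) ∨ (v1 = x + 1 ∧ v2 = y - 1) := by
            clear k1 k2 k3 hqa
            omega
          clear hqa hva
          rcases g1 with ⟨rfl, rfl⟩ | ⟨rfl, rfl⟩ | ⟨rfl, rfl⟩ <;>
          rcases g2 with ⟨h1, h2⟩ | ⟨h1, h2⟩ | ⟨h1, h2⟩ <;>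
          first
          | (exfalso; omega)
          | (rw [h1, h2])
        · exact ⟨∅, by simp, fun v h1 h2 => absurd ⟨v, h1, h2⟩ hq⟩
      obtain ⟨Q, hQc, hQ⟩ := hQ
      have h1 := Finset.le_card_sdiff Q (L (x, y))
      rw [hL] at h1
      obtain ⟨C, hC1, hC2⟩ := Finset.exists_subset_card_eq (by omega : b ≤ (L (x, y) \ Q).card)
      have hdis : ∀ v ∈ R, triLattice.Adj (x, y) v → Disjoint C (c0 v) := by
        intro v hvR ha
        rw [Finset.disjoint_left]
        intro z hz hz'
        exact (Finset.mem_sdiff.1 (hC1 hz)).2 (hQ v hvR ha hz')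
      refine ⟨fun v => if v = (x, y) then C else c0 v, ?_, ?_⟩
      · intro v hvR
        by_cases hv : v = (x, y)
        · subst hv
          simp only [if_true]
          exact ⟨hC1.trans Finset.sdiff_subset, hC2⟩
        · simp only [if_neg hv]
          exact hc0 v (Finset.mem_erase.2 ⟨hv, hvR⟩)
      · intro u huR v hvR ha
        by_cases hu : u = (x, y)
        · subst hu
          simp only [if_true, if_neg ha.ne']
          exact hdis v hvR ha
        · by_cases hv : v = (x, y)
          · subst hv
            simp only [if_true, if_neg hu]
            exact (hdis u huR ha.symm).symm
          · simp only [if_neg hu, if_neg hv]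
            exact hc0d u (Finset.mem_erase.2 ⟨hu, huR⟩) v (Finset.mem_erase.2 ⟨hv, hvR⟩) ha

theorem triangleFree_subgraph_of_triLattice_in_Ch_five_halves (R : Set (ℤ × ℤ))
    (htf : (triLattice.induce R).CliqueFree 3) :
    ∀ a b : ℕ, 0 < b → (a : ℚ) / b ≥ 5 / 2 → Choosable (triLattice.induce R) a b := by
  classical
  intro a b hb hab L hL
  have hab' : 5 * b ≤ 2 * a := by
    have hb' : (0 : ℚ) < b := by exact_mod_cast hb
    rw [ge_iff_le, le_div_iff₀ hb'] at hab
    have : (5 * b : ℚ) ≤ 2 * a := by linarith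
    exact_mod_cast this
  obtain ⟨e, rfl⟩ : ∃ e, a = 2 * b + e := ⟨a - 2 * b, by omega⟩
  let L' : ℤ × ℤ → Finset ℕ := fun v => if h : v ∈ R then L ⟨v, h⟩ else Finset.range (2 * b + e)
  have hL' : ∀ v, (L' v).card = 2 * b + e := by
    intro v
    by_cases h : v ∈ R
    · simp only [L', dif_pos h, hL]
    · simp only [L', dif_neg h, Finset.card_range]
  have hfin : ∀ s : Finset R, ∃ c : ℤ × ℤ → Finset ℕ,
      (∀ v ∈ s.map (Function.Embedding.subtype _), c v ⊆ L' v ∧ (c v).card = b) ∧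
      ∀ u ∈ s.map (Function.Embedding.subtype _), ∀ v ∈ s.map (Function.Embedding.subtype _),
        triLattice.Adj u v → Disjoint (c u) (c v) := by
    intro s
    refine finite_case b e (by omega) L' hL' _ _ le_rfl ?_
    intro u hu v hv w hw h1 h2 h3
    simp only [Finset.mem_map, Function.Embedding.subtype_apply] at hu hv hw
    obtain ⟨u, -, rfl⟩ := hu
    obtain ⟨v, -, rfl⟩ := hv
    obtain ⟨w, -, rfl⟩ := hw
    exact htf {u, v, w} (SimpleGraph.is3Clique_triple_iff.2 ⟨h1, h2, h3⟩)
  choose f hf1 hf2 using hfin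
  have hmem : ∀ (s : Finset R) (v : R), v ∈ s →
      (v : ℤ × ℤ) ∈ s.map (Function.Embedding.subtype _) := by
    intro s v hv
    simp [hv]
  have hfL : ∀ (s : Finset R) (v : R), v ∈ s → f s v ⊆ L v := by
    intro s v hv
    have := (hf1 s v (hmem s v hv)).1
    simpa only [L', dif_pos v.2] using this
  obtain ⟨χ, hχ⟩ := Finset.rado_selection (α := R) (β := fun v => {t // t ∈ (L v).powerset})
    (fun s v => if h : v ∈ s then ⟨f s v, Finset.mem_powerset.2 (hfL s v h)⟩
      else ⟨∅, by simp⟩)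
  refine ⟨fun v => (χ v : Finset ℕ), fun v => ⟨Finset.mem_powerset.1 (χ v).2, ?_⟩, ?_⟩
  · obtain ⟨t, hst, ht⟩ := hχ {v}
    have h1 : v ∈ t := hst (by simp)
    have := ht v (by simp)
    rw [dif_pos h1] at this
    show (χ v : Finset ℕ).card = b
    rw [this]
    exact (hf1 t v (hmem t v h1)).2
  · intro u v ha
    obtain ⟨t, hst, ht⟩ := hχ {u, v}
    have h1 : u ∈ t := hst (by simp)
    have h2 : v ∈ t := hst (by simp)
    have e1 := ht u (by simp)
    have e2 := ht v (by simp)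
    rw [dif_pos h1] at e1
    rw [dif_pos h2] at e2
    show Disjoint (χ u : Finset ℕ) (χ v : Finset ℕ)
    rw [e1, e2]
    exact hf2 t u (hmem t u h1) v (hmem t v h2) ha
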